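/- arXiv:2312.00650 — 8 statements merged into one kernel-verified Lean document; each statement's English description precedes it below -/
import Mathlib

section
/- Let α : G → H be an option preserving map between gamegraphs G and H. Then α maps the starting position of G to the starting position of H if and only if α is surjective on vertices. -/
/-- The set of options (out-neighbors) of a vertex `p` in the digraph with arrow
relation `E`. -/
def OptSet {V : Type*} (E : V → V → Prop) (p : V) : Set V := {q | E p q}

/-- A digraph has no infinite directed walk (i.e. it is a rulegraph). -/
def NoInfiniteWalk {V : Type*} (E : V → V → Prop) : Prop :=
  ¬ ∃ f : ℕ → V, ∀ n, E (f n) (f (n + 1))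

/-- A map `α` between digraphs is option preserving if `Opt (α p) = α '' Opt p`
for every vertex `p`. -/
def OptionPreserving {V W : Type*} (E : V → V → Prop) (F : W → W → Prop)
    (α : V → W) : Prop :=
  ∀ p, OptSet F (α p) = α '' OptSet E p

/-- A source is a vertex with no in-neighbors. -/
def IsSource {V : Type*} (E : V → V → Prop) (s : V) : Prop := ∀ q, ¬ E q s

/-- A gamegraph is a rulegraph with a unique source `s` (the starting position)
such that every vertex is a subposition of `s`. -/
def IsGamegraph {V : Type*} (E : V → V → Prop) (s : V) : Prop :=
  NoInfiniteWalk E ∧ IsSource E s ∧ (∀ t, IsSource E t → t = s) ∧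
    ∀ p, Relation.ReflTransGen E s p

/-- The equivalence class of `p` under the relation `r`. -/
def cls {V : Type*} (r : V → V → Prop) (p : V) : Set V := {x | r p x}

/-- A congruence relation on a rulegraph: an equivalence relation such that
related vertices have the same set of classes of options. -/
def IsCongruence {V : Type*} (E : V → V → Prop) (r : V → V → Prop) : Prop :=
  Equivalence r ∧ ∀ p q, r p q → cls r '' OptSet E p = cls r '' OptSet E q

/-- A rulegraph is simple if its only congruence relation is equality. -/
def IsSimple {V : Type*} (E : V → V → Prop) : Prop :=
  ∀ r : V → V → Prop, IsCongruence E r → ∀ p q, r p q → p = q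

/-- The arrow relation of the quotient digraph by a setoid `s`: there is an arrow
from `[p]` to `[q]` exactly when there are `p' ∼ p` and `q' ∼ q` with `q' ∈ Opt p'`. -/
def QuotE {V : Type*} (E : V → V → Prop) (s : Setoid V) :
    Quotient s → Quotient s → Prop :=
  fun a b => ∃ p q : V, Quotient.mk s p = a ∧ Quotient.mk s q = b ∧ E p q

theorem OptionPreserving.map_rel {V W : Type*} {E : V → V → Prop} {F : W → W → Prop}
    {α : V → W} (hα : OptionPreserving E F α) {p q : V} (h : E p q) : F (α p) (α q) :=
  (hα p).symm.subset (Set.mem_image_of_mem α h)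

theorem OptionPreserving.exists_of_rel {V W : Type*} {E : V → V → Prop} {F : W → W → Prop}
    {α : V → W} (hα : OptionPreserving E F α) {p : V} {w : W} (h : F (α p) w) :
    ∃ q, E p q ∧ α q = w :=
  (hα p).subset h

/-- An option preserving map between gamegraphs is source preserving iff it is
surjective. -/
theorem stmt_1 {V W : Type*} (E : V → V → Prop) (F : W → W → Prop)
    (sG : V) (sH : W) (hG : IsGamegraph E sG) (hH : IsGamegraph F sH)
    (α : V → W) (hα : OptionPreserving E F α) :
    α sG = sH ↔ Function.Surjective α := by
  obtain ⟨-, -, hG_unique, -⟩ := hG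
  obtain ⟨-, hH_source, -, hH_reach⟩ := hH
  constructor
  · rintro rfl w
    induction hH_reach w with
    | refl => exact ⟨sG, rfl⟩
    | tail _ h ih =>
      obtain ⟨p, rfl⟩ := ih
      obtain ⟨q, -, hq⟩ := hα.exists_of_rel h
      exact ⟨q, hq⟩
  · intro hsurj
    obtain ⟨p, rfl⟩ := hsurj sH
    have hp : IsSource E p := fun q h => hH_source (α q) (hα.map_rel h)
    rw [hG_unique p hp]
end

section
/- Let μ be a map from subsets of a type Y to Y, let f be a μ-valuation on a rulegraph R and g a μ-valuation on a rulegraph S, and let α : R → S be an option preserving map. Then g(α(p)) = f(p) for every vertex p of R. -/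
/-- A digraph without infinite directed walks is well-founded along reversed arrows. -/
theorem NoInfiniteWalk.wellFounded {V : Type*} {E : V → V → Prop} (h : NoInfiniteWalk E) :
    WellFounded fun q p => E p q :=
  wellFounded_iff_isEmpty_descending_chain.2 ⟨fun w => h ⟨w.1, w.2⟩⟩

/-- Option preserving maps between rulegraphs preserve valuations. -/
theorem stmt_2 {V W Y : Type*} (E : V → V → Prop) (F : W → W → Prop)
    (hR : NoInfiniteWalk E) (hS : NoInfiniteWalk F)
    (μ : Set Y → Y) (f : V → Y) (g : W → Y)
    (hf : ∀ p, f p = μ (f '' OptSet E p))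
    (hg : ∀ q, g q = μ (g '' OptSet F q))
    (α : V → W) (hα : OptionPreserving E F α) :
    ∀ p : V, g (α p) = f p := by
  intro p
  induction p using hR.wellFounded.induction with
  | _ p ih =>
    rw [hg, hf, hα p, Set.image_image]
    exact congrArg μ (Set.image_congr ih)
end

section
/- Let G and H be gamegraphs, and suppose there exist option preserving maps α : G → H and β : H → G. Then both α and β are source preserving, i.e., α maps the starting position of G to the starting position of H and β maps the starting position of H to the starting position of G. -/
/-- In a rulegraph, no vertex has its image under an endomorphism as a proper subposition. -/
theorem NoInfiniteWalk.not_transGen_map {V : Type*} {E : V → V → Prop}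
    (hE : NoInfiniteWalk E) {γ : V → V} (hγ : ∀ p q, E p q → E (γ p) (γ q)) (p : V) :
    ¬ Relation.TransGen E p (γ p) := by
  have hwf : WellFounded (Function.swap E) :=
    wellFounded_iff_isEmpty_descending_chain.2 ⟨fun f => hE ⟨f.1, f.2⟩⟩
  induction p using hwf.transGen.induction with
  | _ p ih =>
    intro h
    exact ih (γ p) (Relation.transGen_swap.2 h) (h.lift γ hγ)

/-- A source is not a proper subposition of any vertex. -/
theorem IsSource.not_transGen {V : Type*} {E : V → V → Prop} {s : V} (hs : IsSource E s)
    (p : V) : ¬ Relation.TransGen E p s := by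
  intro h
  obtain ⟨q, -, hq⟩ := Relation.TransGen.tail'_iff.1 h
  exact hs q hq

/-- If there are option preserving maps between gamegraphs in both directions,
then both are source preserving. -/
theorem stmt_6 {V W : Type*} (E : V → V → Prop) (F : W → W → Prop)
    (sG : V) (sH : W) (hG : IsGamegraph E sG) (hH : IsGamegraph F sH)
    (α : V → W) (β : W → V)
    (hα : OptionPreserving E F α) (hβ : OptionPreserving F E β) :
    α sG = sH ∧ β sH = sG := by
  obtain ⟨hE, hsG, -, reachG⟩ := hG
  obtain ⟨-, -, -, reachH⟩ := hH
  have hβα : β (α sG) = sG :=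
    (Relation.reflTransGen_iff_eq_or_transGen.1 (reachG (β (α sG)))).resolve_right
      (hE.not_transGen_map (γ := β ∘ α) (fun _ _ h => hβ.map_rel (hα.map_rel h)) sG)
  have hαs : α sG = sH := by
    refine (Relation.reflTransGen_iff_eq_or_transGen.1 (reachH (α sG))).resolve_right fun h => ?_
    have hβs : Relation.TransGen E (β sH) (β (α sG)) := h.lift β fun _ _ => hβ.map_rel
    rw [hβα] at hβs
    exact hsG.not_transGen _ hβs
  exact ⟨hαs, hαs ▸ hβα⟩
end

section
/- If R is a rulegraph and ∼ is a congruence relation on R, then the quotient digraph R/∼ is a rulegraph, i.e., it has no infinite directed walk. -/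
/-- An arrow of the quotient by a congruence lifts to an arrow starting at any given
representative of its tail. -/
theorem IsCongruence.exists_lift {V : Type*} {E : V → V → Prop} {s : Setoid V}
    (hcong : IsCongruence E s.r) {p : V} {a b : Quotient s}
    (hp : Quotient.mk s p = a) (hab : QuotE E s a b) :
    ∃ q, E p q ∧ Quotient.mk s q = b := by
  obtain ⟨p', q', hp', hq', hE⟩ := hab
  have hmem : cls s.r q' ∈ cls s.r '' OptSet E p := by
    rw [hcong.2 p p' (Quotient.exact (hp.trans hp'.symm))]
    exact ⟨q', hE, rfl⟩
  obtain ⟨q, hq, hcls⟩ := hmem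
  have hqq' : q' ∈ cls s.r q := hcls ▸ s.refl q'
  exact ⟨q, hq, (Quotient.sound hqq').trans hq'⟩

/-- The quotient of a rulegraph by a congruence relation is a rulegraph. -/
theorem stmt_9 {V : Type*} (E : V → V → Prop) (hR : NoInfiniteWalk E)
    (s : Setoid V) (hcong : IsCongruence E s.r) :
    NoInfiniteWalk (QuotE E s) := by
  rintro ⟨f, hf⟩
  obtain ⟨p₀, hp₀⟩ := Quotient.exists_rep (f 0)
  choose next hnextE hnextClass using
    fun (n : ℕ) (p : V) (hp : Quotient.mk s p = f n) => hcong.exists_lift hp (hf n)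
  let walk : ∀ n, {p : V // Quotient.mk s p = f n} := fun n =>
    Nat.rec ⟨p₀, hp₀⟩ (fun k p => ⟨next k p.1 p.2, hnextClass k p.1 p.2⟩) n
  exact hR ⟨fun n => (walk n).1, fun n => hnextE n (walk n).1 (walk n).2⟩
end

section
/- Let ∼ be a congruence relation on a rulegraph R. If q is a subposition of p and p ∼ q, then p = q. In particular, if R is a gamegraph with starting position s, then the congruence class of s is the singleton {s}. -/
/-- The flipped arrow relation of a rulegraph is well-founded. -/
theorem NoInfiniteWalk.wellFounded_s10 {V : Type*} {E : V → V → Prop} (hR : NoInfiniteWalk E) :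
    WellFounded (flip E) :=
  wellFounded_iff_isEmpty_descending_chain.2 ⟨fun f => hR ⟨f.1, f.2⟩⟩

/-- An arrow out of `p` lifts to an arrow out of any vertex congruent to `p`. -/
theorem IsCongruence.exists_option {V : Type*} {E r : V → V → Prop} (hcong : IsCongruence E r)
    {p p' q : V} (hp : r p p') (hq : E p q) : ∃ q', E p' q' ∧ r q q' := by
  have hmem : cls r q ∈ cls r '' OptSet E p' := hcong.2 p p' hp ▸ ⟨q, hq, rfl⟩
  obtain ⟨q', hq', heq⟩ := hmem
  have hself : q' ∈ cls r q' := hcong.1.refl q'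
  exact ⟨q', hq', heq.subset hself⟩

/-- A nontrivial walk out of `p` lifts to a nontrivial walk out of any vertex congruent to `p`. -/
theorem IsCongruence.exists_transGen {V : Type*} {E r : V → V → Prop}
    (hcong : IsCongruence E r) {p p' q : V} (hp : r p p') (hq : Relation.TransGen E p q) :
    ∃ q', Relation.TransGen E p' q' ∧ r q q' := by
  induction hq with
  | single h =>
    obtain ⟨q', hq', hr⟩ := hcong.exists_option hp h
    exact ⟨q', .single hq', hr⟩
  | tail _ h ih =>
    obtain ⟨b, hb, hrb⟩ := ih
    obtain ⟨q', hq', hr⟩ := hcong.exists_option hrb h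
    exact ⟨q', hb.tail hq', hr⟩

/-- A vertex of a rulegraph is never congruent to the end of a nontrivial walk out of it. -/
theorem IsCongruence.not_rel_of_transGen {V : Type*} {E r : V → V → Prop}
    (hcong : IsCongruence E r) (hR : NoInfiniteWalk E) {p q : V}
    (hq : Relation.TransGen E p q) : ¬ r p q := by
  induction p using hR.wellFounded_s10.transGen.induction generalizing q with
  | _ p ih =>
    intro hr
    obtain ⟨q', hq', hrq⟩ := hcong.exists_transGen hr hq
    exact ih q (Relation.transGen_swap.2 hq) hq' hrq

/-- No vertical collapsing: a congruence relation never relates a position to a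
proper subposition; in particular the class of the starting position of a
gamegraph is a singleton. -/
theorem stmt_10 {V : Type*} (E : V → V → Prop) (hR : NoInfiniteWalk E)
    (r : V → V → Prop) (hcong : IsCongruence E r) :
    (∀ p q : V, Relation.ReflTransGen E p q → r p q → p = q) ∧
      ∀ s : V, IsGamegraph E s → cls r s = {s} := by
  have collapse : ∀ p q : V, Relation.ReflTransGen E p q → r p q → p = q := by
    intro p q hpq hr
    rcases Relation.reflTransGen_iff_eq_or_transGen.1 hpq with h | h
    · exact h.symm
    · exact absurd hr (hcong.not_rel_of_transGen hR h)
  refine ⟨collapse, fun s hs => Set.ext fun x => ⟨fun hx => ?_, ?_⟩⟩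
  · exact (collapse s x (hs.2.2.2 x) hx).symm
  · rintro rfl
    exact hcong.1.refl x
end

section
/- (First Isomorphism Theorem for rulegraphs) If α : R → S is an option preserving map between rulegraphs, then the map [p] ↦ α(p) is a well-defined bijective option preserving map from the quotient rulegraph R/ker(α) onto the subdigraph of S induced by the image α(V(R)); in particular R/ker(α) and the image rulegraph α(R) are isomorphic as digraphs. -/
/-- First Isomorphism Theorem for rulegraphs: for an option preserving map
`α : R → S`, the map `[p] ↦ α p` is a well-defined bijective option preserving
map (indeed a digraph isomorphism) from `R / ker α` onto the subdigraph of `S`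
induced by the image of `α`. -/
theorem stmt_13 {V W : Type*} (E : V → V → Prop) (F : W → W → Prop)
    (hR : NoInfiniteWalk E) (hS : NoInfiniteWalk F)
    (α : V → W) (hα : OptionPreserving E F α) :
    ∃ φ : Quotient (Setoid.ker α) → ↥(Set.range α),
      (∀ p : V, φ (Quotient.mk (Setoid.ker α) p) = ⟨α p, Set.mem_range_self p⟩) ∧
      Function.Bijective φ ∧
      OptionPreserving (QuotE E (Setoid.ker α))
        (fun a b : ↥(Set.range α) => F a.1 b.1) φ ∧
      ∀ a b : Quotient (Setoid.ker α),
        QuotE E (Setoid.ker α) a b ↔ F (φ a).1 (φ b).1 := by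
  have arrow : ∀ a b : Quotient (Setoid.ker α),
      QuotE E (Setoid.ker α) a b ↔
        F (Setoid.quotientKerEquivRange α a).1 (Setoid.quotientKerEquivRange α b).1 := by
    rintro ⟨p⟩ ⟨q⟩
    change QuotE E (Setoid.ker α) (Quotient.mk _ p) (Quotient.mk _ q) ↔ α q ∈ OptSet F (α p)
    constructor
    · rintro ⟨p', q', hp, hq, h⟩
      have hp : α p' = α p := Quotient.exact hp
      have hq : α q' = α q := Quotient.exact hq
      rw [← hp, ← hq, hα p']
      exact Set.mem_image_of_mem α h
    · rw [hα p]
      rintro ⟨q', h, hq⟩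
      exact ⟨p, q', rfl, Quotient.sound hq, h⟩
  refine ⟨Setoid.quotientKerEquivRange α, fun _ => rfl, Equiv.bijective _, fun a => ?_, arrow⟩
  ext y
  obtain ⟨b, rfl⟩ := (Setoid.quotientKerEquivRange α).surjective y
  rw [(Setoid.quotientKerEquivRange α).injective.mem_set_image]
  exact (arrow a b).symm
end

section
/- A rulegraph R is simple if and only if every option preserving map α : R → S into any rulegraph S is injective. -/
universe u

/-- The fibers of an option preserving map form a congruence relation. -/
theorem OptionPreserving.isCongruence {V W : Type*} {E : V → V → Prop} {F : W → W → Prop}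
    {α : V → W} (hα : OptionPreserving E F α) : IsCongruence E (fun p q => α p = α q) := by
  refine ⟨⟨fun _ => rfl, Eq.symm, Eq.trans⟩, fun p q hpq => ?_⟩
  have image_cls (p : V) : cls (fun p q => α p = α q) '' OptSet E p =
      (fun w => {x | w = α x}) '' OptSet F (α p) := by
    rw [hα p, Set.image_image]
    rfl
  simp only [image_cls, hpq]

/-- An arrow of the quotient by a congruence lifts to an arrow starting at any given
representative of its tail. -/
theorem IsCongruence.exists_of_quotE {V : Type*} {E : V → V → Prop} {s : Setoid V}
    (hs : IsCongruence E s) {p : V} {b : Quotient s} (h : QuotE E s (Quotient.mk s p) b) :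
    ∃ q, E p q ∧ Quotient.mk s q = b := by
  obtain ⟨p', q', hp, rfl, hE⟩ := h
  have hmem : cls s q' ∈ cls s '' OptSet E p :=
    hs.2 p' p (Quotient.exact hp) ▸ Set.mem_image_of_mem _ hE
  obtain ⟨q, hq, hcls⟩ := hmem
  have hqq' : q' ∈ cls s q := hcls ▸ s.refl q'
  exact ⟨q, hq, Quotient.sound hqq'⟩

/-- The quotient map of a congruence relation is option preserving. -/
theorem IsCongruence.optionPreserving_mk {V : Type*} {E : V → V → Prop} {s : Setoid V}
    (hs : IsCongruence E s) : OptionPreserving E (QuotE E s) (Quotient.mk s) := by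
  intro p
  ext b
  constructor
  · exact hs.exists_of_quotE
  · rintro ⟨q, hq, rfl⟩
    exact ⟨p, q, rfl, rfl, hq⟩

/-- The quotient of a rulegraph by a congruence relation is a rulegraph. -/
theorem IsCongruence.noInfiniteWalk_quotE {V : Type*} {E : V → V → Prop} {s : Setoid V}
    (hs : IsCongruence E s) (hE : NoInfiniteWalk E) : NoInfiniteWalk (QuotE E s) := by
  rintro ⟨f, hf⟩
  have lift_step (n : ℕ) (p : {p // Quotient.mk s p = f n}) :
      ∃ q : {q // Quotient.mk s q = f (n + 1)}, E p q := by
    have h := hf n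
    rw [← p.2] at h
    obtain ⟨q, hq, hqf⟩ := hs.exists_of_quotE h
    exact ⟨⟨q, hqf⟩, hq⟩
  choose next hnext using lift_step
  obtain ⟨p₀, hp₀⟩ := Quotient.exists_rep (f 0)
  let g (n : ℕ) : {p // Quotient.mk s p = f n} := Nat.rec ⟨p₀, hp₀⟩ next n
  exact hE ⟨fun n => (g n).1, fun n => hnext n (g n)⟩

/-- A rulegraph is simple iff every option preserving map out of it is
injective. -/
theorem stmt_14 {V : Type u} (E : V → V → Prop) (hR : NoInfiniteWalk E) :
    IsSimple E ↔
      ∀ (W : Type u) (F : W → W → Prop), NoInfiniteWalk F →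
        ∀ α : V → W, OptionPreserving E F α → Function.Injective α := by
  constructor
  · intro hE W F _ α hα p q hpq
    exact hE _ hα.isCongruence p q hpq
  · intro hinj r hr p q hpq
    let s : Setoid V := ⟨r, hr.1⟩
    have hs : IsCongruence E s := hr
    exact hinj _ _ (hs.noInfiniteWalk_quotE hR) _ hs.optionPreserving_mk (Quotient.sound hpq)
end

section
/- Let R be a rulegraph and let ∼ and ≈ be congruence relations on R such that both quotient rulegraphs R/∼ and R/≈ are simple. Then ∼ and ≈ are the same relation. -/
/-- An equivalence relation is a congruence iff every option of a vertex is matched by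
a related option of each related vertex. -/
theorem isCongruence_iff {V : Type*} {E r : V → V → Prop} (hr : Equivalence r) :
    IsCongruence E r ↔ ∀ p q, r p q → ∀ p', E p p' → ∃ q', E q q' ∧ r p' q' := by
  have cls_eq {p q : V} (h : r p q) : cls r p = cls r q :=
    Set.ext fun _ => ⟨hr.trans (hr.symm h), hr.trans h⟩
  constructor
  · rintro ⟨-, h⟩ p q hpq p' hp'
    have hmem : cls r p' ∈ cls r '' OptSet E q := h p q hpq ▸ Set.mem_image_of_mem _ hp'
    obtain ⟨q', hq', heq⟩ := hmem
    have hself : q' ∈ cls r p' := heq ▸ hr.refl q'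
    exact ⟨q', hq', hself⟩
  · intro h
    have image_subset {p q : V} (hpq : r p q) :
        cls r '' OptSet E p ⊆ cls r '' OptSet E q := by
      rintro _ ⟨p', hp', rfl⟩
      obtain ⟨q', hq', hr'⟩ := h p q hpq p' hp'
      exact ⟨q', hq', (cls_eq hr').symm⟩
    exact ⟨hr, fun p q hpq => (image_subset hpq).antisymm (image_subset (hr.symm hpq))⟩

/-- The join of two congruence relations is a congruence relation. -/
theorem IsCongruence.sup {V : Type*} {E : V → V → Prop} {s₁ s₂ : Setoid V}
    (h₁ : IsCongruence E s₁.r) (h₂ : IsCongruence E s₂.r) :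
    IsCongruence E (s₁ ⊔ s₂).r := by
  have m₁ := (isCongruence_iff s₁.iseqv).1 h₁
  have m₂ := (isCongruence_iff s₂.iseqv).1 h₂
  have le₁ : s₁ ≤ s₁ ⊔ s₂ := le_sup_left
  have le₂ : s₂ ≤ s₁ ⊔ s₂ := le_sup_right
  have step {p q : V} (h : s₁ p q ∨ s₂ p q) (p' : V) (hp' : E p p') :
      ∃ q', E q q' ∧ (s₁ ⊔ s₂) p' q' := by
    rcases h with h | h
    · obtain ⟨q', hq', hr⟩ := m₁ p q h p' hp'
      exact ⟨q', hq', le₁ hr⟩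
    · obtain ⟨q', hq', hr⟩ := m₂ p q h p' hp'
      exact ⟨q', hq', le₂ hr⟩
  have both : ∀ p q, Relation.EqvGen (fun x y => s₁ x y ∨ s₂ x y) p q →
      (∀ p', E p p' → ∃ q', E q q' ∧ (s₁ ⊔ s₂) p' q') ∧
      (∀ q', E q q' → ∃ p', E p p' ∧ (s₁ ⊔ s₂) q' p') := by
    intro p q h
    induction h with
    | rel x y h => exact ⟨step h, step (h.imp s₁.symm' s₂.symm')⟩
    | refl x => exact ⟨fun x' h => ⟨x', h, Setoid.refl' _ x'⟩,
        fun x' h => ⟨x', h, Setoid.refl' _ x'⟩⟩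
    | symm x y _ ih => exact ih.symm
    | trans x y z _ _ ihxy ihyz =>
      constructor
      · intro x' hx'
        obtain ⟨y', hy', hxy⟩ := ihxy.1 x' hx'
        obtain ⟨z', hz', hyz⟩ := ihyz.1 y' hy'
        exact ⟨z', hz', Setoid.trans' _ hxy hyz⟩
      · intro z' hz'
        obtain ⟨y', hy', hzy⟩ := ihyz.2 z' hz'
        obtain ⟨x', hx', hyx⟩ := ihxy.2 y' hy'
        exact ⟨x', hx', Setoid.trans' _ hzy hyx⟩
  refine (isCongruence_iff (s₁ ⊔ s₂).iseqv).2 fun p q hpq => (both p q ?_).1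
  have hpq' : (s₁ ⊔ s₂) p q := hpq
  rwa [Setoid.sup_eq_eqvGen] at hpq'

/-- A congruence relation containing a setoid with simple quotient is contained in it. -/
theorem IsSimple.le_of_isCongruence {V : Type*} {E : V → V → Prop} {s t : Setoid V}
    (hs : IsSimple (QuotE E s)) (ht : IsCongruence E t.r) (hst : s ≤ t) : t ≤ s := by
  have m := (isCongruence_iff t.iseqv).1 ht
  let f : Quotient s → Quotient t := Quotient.map id fun _ _ h => hst h
  have hf : Equivalence fun a b => f a = f b := ⟨fun _ => rfl, Eq.symm, Eq.trans⟩
  have hcong : IsCongruence (QuotE E s) fun a b => f a = f b := by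
    refine (isCongruence_iff hf).2 ?_
    rintro _ b hab _ ⟨p, p', rfl, rfl, hp'⟩
    induction b using Quotient.inductionOn with
    | h q =>
      obtain ⟨q', hq', hr⟩ := m p q (Quotient.exact hab) p' hp'
      exact ⟨Quotient.mk s q', ⟨q, q', rfl, rfl, hq'⟩, Quotient.sound hr⟩
  exact fun p q hpq =>
    Quotient.exact (hs _ hcong (Quotient.mk s p) (Quotient.mk s q) (Quotient.sound hpq))

/-- Two congruence relations with simple quotients coincide. -/
theorem stmt_16 {V : Type*} (E : V → V → Prop) (hR : NoInfiniteWalk E)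
    (s₁ s₂ : Setoid V)
    (h₁ : IsCongruence E s₁.r) (h₂ : IsCongruence E s₂.r)
    (hs₁ : IsSimple (QuotE E s₁)) (hs₂ : IsSimple (QuotE E s₂)) :
    ∀ p q : V, s₁.r p q ↔ s₂.r p q := by
  have hsup := h₁.sup h₂
  have heq : s₁ = s₂ :=
    (le_sup_left.antisymm (hs₁.le_of_isCongruence hsup le_sup_left)).trans
      (le_sup_right.antisymm (hs₂.le_of_isCongruence hsup le_sup_right)).symm
  exact fun p q => heq ▸ Iff.rfl
end
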